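/- Let γ ∈ L¹(ℝ) be a function that is not almost everywhere zero, whose Fourier transform γ̂ (with convention γ̂(ξ) = ∫_ℝ e^{−2πiξt} γ(t) dt) is real-valued, nonnegative, and supported in [0,1]. Then ∫_{−∞}^{0} e^{2πit} γ(t) dt ≠ 0, i.e. γ is non-degenerate. -/

import Mathlib

open MeasureTheory Real Set Function
open scoped FourierTransform ENNReal NNReal

/-- `e2pi t = e^{2πit}`. -/
noncomputable def e2pi (t : ℝ) : ℂ := Complex.exp (2 * (Real.pi : ℂ) * Complex.I * (t : ℂ))

/-- Convolution of two functions on `ℝ`. -/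
noncomputable def conv (f g : ℝ → ℂ) (x : ℝ) : ℂ := ∫ t, f t * g (x - t)

/-!
The Fourier transform of `f(t) = e^{2πit} γ(t)` is nonnegative and, being continuous, vanishes on
`(-∞, 0]`. For `c > 0`, pairing `𝓕 f` with `e^{-2πc|ξ|} sign ξ`, whose Fourier transform is
`-(i/π) t / (c² + t²)`, gives `∫_0^∞ e^{-2πcξ} 𝓕 f(ξ) dξ = -(i/π) ∫ t / (c² + t²) f(t) dt`.
Since `∫_0^∞ t / (c² + t²) dc = (π/2) sign t` is bounded in `t`, Fubini allows integrating in `c`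
for every `f ∈ L¹`, even if `𝓕 f` is not integrable. As `∫ f = 𝓕 f(0) = 0`, the right-hand side
becomes `i ∫_{-∞}^0 f`, while the left-hand side is an integral of positive numbers.
-/

open Complex (I)
open Filter
open scoped Topology ContDiff SchwartzMap

section FourierTransform

variable {V : Type*} [NormedAddCommGroup V] [InnerProductSpace ℝ V] [MeasurableSpace V]
  [BorelSpace V] [FiniteDimensional ℝ V]
  {E : Type*} [NormedAddCommGroup E] [NormedSpace ℂ E]

lemma continuous_fourier_of_integrable {f : V → E} (hf : Integrable f) : Continuous (𝓕 f) :=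
  VectorFourier.fourierIntegral_continuous continuous_fourierChar continuous_inner hf

lemma norm_fourier_le_integral_norm (f : V → E) (ξ : V) : ‖𝓕 f ξ‖ ≤ ∫ v, ‖f v‖ :=
  VectorFourier.norm_fourierIntegral_le_integral_norm 𝐞 volume (innerₗ V) f ξ

variable [CompleteSpace E]

lemma integral_fourier_smul_eq_integral_smul_fourier {g : V → ℂ} {f : V → E}
    (hg : Integrable g) (hf : Integrable f) : ∫ ξ, 𝓕 g ξ • f ξ = ∫ v, g v • 𝓕 f v := by
  simpa using! VectorFourier.integral_fourierIntegral_smul_eq_flip (L := innerₗ V)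
    continuous_fourierChar continuous_inner hg hf

lemma ae_eq_zero_of_fourier_eq_zero {f : V → E} (hf : Integrable f) (h : 𝓕 f = 0) :
    f =ᵐ[volume] 0 := by
  refine ae_eq_zero_of_integral_contDiff_smul_eq_zero hf.locallyIntegrable fun φ hφ hφc ↦ ?_
  have hφc' : HasCompactSupport (Complex.ofRealCLM ∘ φ) := hφc.comp_left rfl
  have hφ' : ContDiff ℝ ∞ (Complex.ofRealCLM ∘ φ) := by fun_prop
  let Φ : 𝓢(V, ℂ) := hφc'.toSchwartzMap hφ'
  have hΦ : 𝓕 (⇑(𝓕⁻ Φ : 𝓢(V, ℂ))) = Φ := by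
    rw [← SchwartzMap.fourier_coe, FourierTransform.fourier_fourierInv_eq]
  calc ∫ v, φ v • f v = ∫ v, 𝓕 (⇑(𝓕⁻ Φ : 𝓢(V, ℂ))) v • f v := by simp [hΦ, Φ]
    _ = ∫ v, (𝓕⁻ Φ : 𝓢(V, ℂ)) v • 𝓕 f v :=
      integral_fourier_smul_eq_integral_smul_fourier (𝓕⁻ Φ : 𝓢(V, ℂ)).integrable hf
    _ = 0 := by simp [h]

end FourierTransform

section LaplaceTransform

variable {E : Type*} [NormedAddCommGroup E] [NormedSpace ℂ E] {f : ℝ → E} {c : ℝ}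

lemma fourier_indicator_Ioi_exp (hc : 0 < c) (t : ℝ) :
    𝓕 ((Ioi 0).indicator fun ξ : ℝ ↦ (rexp (-(c * ξ)) : ℂ)) t = (c + 2 * π * t * I)⁻¹ := by
  have hre : (-(c + 2 * π * t * I : ℂ)).re < 0 := by simpa using hc
  calc 𝓕 ((Ioi 0).indicator fun ξ : ℝ ↦ (rexp (-(c * ξ)) : ℂ)) t
      = ∫ ξ : ℝ in Ioi 0, Complex.exp (-(c + 2 * π * t * I) * ξ) := by
        rw [fourier_real_eq_integral_exp_smul, ← integral_indicator measurableSet_Ioi]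
        refine integral_congr_ae (.of_forall fun ξ ↦ ?_)
        by_cases hξ : ξ ∈ Ioi 0
        · simp only [indicator_of_mem hξ, smul_eq_mul, Complex.ofReal_exp, ← Complex.exp_add]
          push_cast
          ring_nf
        · simp [indicator_of_notMem hξ]
    _ = (c + 2 * π * t * I)⁻¹ := by
        rw [integral_exp_mul_complex_Ioi hre]
        simp [-neg_add_rev, neg_div_neg_eq]

lemma integrableOn_exp_neg_mul_smul_fourier (hf : Integrable f) (hc : 0 < c) :
    IntegrableOn (fun ξ ↦ rexp (-(c * ξ)) • 𝓕 f ξ) (Ioi 0) := by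
  have hexp : IntegrableOn (fun ξ ↦ rexp (-(c * ξ))) (Ioi 0) := by
    simpa only [neg_mul] using integrableOn_exp_mul_Ioi (neg_neg_of_pos hc) 0
  exact hexp.smul_bdd _ (continuous_fourier_of_integrable hf).aestronglyMeasurable
    (.of_forall (norm_fourier_le_integral_norm f))

lemma integrable_inv_add_mul_I_smul (hf : Integrable f) (hc : c ≠ 0) (b : ℝ) :
    Integrable fun t : ℝ ↦ (c + b * t * I : ℂ)⁻¹ • f t := by
  refine hf.bdd_smul |c|⁻¹ (by fun_prop) (.of_forall fun t ↦ ?_)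
  rw [norm_inv]
  gcongr
  simpa using Complex.abs_re_le_norm (c + b * t * I)

variable [CompleteSpace E]

lemma integral_Ioi_exp_neg_mul_smul_fourier (hf : Integrable f) (hc : 0 < c) :
    ∫ ξ in Ioi 0, rexp (-(c * ξ)) • 𝓕 f ξ = ∫ t : ℝ, (c + 2 * π * t * I : ℂ)⁻¹ • f t := by
  have hexp : Integrable ((Ioi 0).indicator fun ξ : ℝ ↦ (rexp (-(c * ξ)) : ℂ)) := by
    simpa only [neg_mul, integrable_indicator_iff measurableSet_Ioi] using!
      (integrableOn_exp_mul_Ioi (neg_neg_of_pos hc) 0).ofReal (𝕜 := ℂ)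
  simp_rw [← fourier_indicator_Ioi_exp hc]
  rw [integral_fourier_smul_eq_integral_smul_fourier hexp hf,
    ← integral_indicator measurableSet_Ioi]
  refine integral_congr_ae (.of_forall fun ξ ↦ ?_)
  by_cases hξ : ξ ∈ Ioi 0 <;> simp [hξ, -mem_Ioi, -Complex.ofReal_exp]

lemma integral_Iic_exp_mul_smul_fourier (hf : Integrable f) (hc : 0 < c) :
    ∫ ξ in Iic 0, rexp (c * ξ) • 𝓕 f ξ = ∫ t : ℝ, (c - 2 * π * t * I : ℂ)⁻¹ • f t := by
  have hneg (ξ : ℝ) : 𝓕 (fun t ↦ f (-t)) ξ = 𝓕 f (-ξ) := by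
    rw [← fourierInv_eq_fourier_comp_neg, fourierInv_eq_fourier_neg]
  calc ∫ ξ in Iic 0, rexp (c * ξ) • 𝓕 f ξ
      = ∫ ξ in Ioi 0, rexp (-(c * ξ)) • 𝓕 (fun t ↦ f (-t)) ξ := by
        simpa [hneg] using (integral_comp_neg_Ioi 0 fun ξ ↦ rexp (c * ξ) • 𝓕 f ξ).symm
    _ = ∫ t : ℝ, (c + 2 * π * t * I : ℂ)⁻¹ • f (-t) :=
        integral_Ioi_exp_neg_mul_smul_fourier hf.comp_neg hc
    _ = ∫ t : ℝ, (c - 2 * π * t * I : ℂ)⁻¹ • f t := by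
        rw [← integral_neg_eq_self]
        simp [sub_eq_add_neg]

lemma inv_add_sub_inv_sub_eq (hc : c ≠ 0) (t : ℝ) :
    (2 * π * c + 2 * π * t * I : ℂ)⁻¹ - (2 * π * c - 2 * π * t * I)⁻¹ =
      -(I / π) * (t / (c ^ 2 + t ^ 2)) := by
  have hadd : (c + t * I : ℂ) ≠ 0 := fun h ↦ hc (by simpa using congrArg Complex.re h)
  have hsub : (c - t * I : ℂ) ≠ 0 := fun h ↦ hc (by simpa using congrArg Complex.re h)
  have hπ : (π : ℂ) ≠ 0 := Complex.ofReal_ne_zero.2 pi_ne_zero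
  have hfactor : (c ^ 2 + t ^ 2 : ℂ) = (c + t * I) * (c - t * I) := by
    linear_combination t ^ 2 * Complex.I_sq
  calc (2 * π * c + 2 * π * t * I : ℂ)⁻¹ - (2 * π * c - 2 * π * t * I)⁻¹
      = (2 * π * (c + t * I))⁻¹ - (2 * π * (c - t * I))⁻¹ := by ring_nf
    _ = -(I / π) * (t / (c ^ 2 + t ^ 2)) := by
        rw [hfactor]
        field_simp
        ring

lemma integral_Ioi_sub_integral_Iic_exp_smul_fourier (hf : Integrable f) (hc : 0 < c) :
    (∫ ξ in Ioi 0, rexp (-(2 * π * c * ξ)) • 𝓕 f ξ) -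
        ∫ ξ in Iic 0, rexp (2 * π * c * ξ) • 𝓕 f ξ =
      (-(I / π)) • ∫ t, (t / (c ^ 2 + t ^ 2)) • f t := by
  have h2c : 0 < 2 * π * c := by positivity
  rw [integral_Ioi_exp_neg_mul_smul_fourier hf h2c, integral_Iic_exp_mul_smul_fourier hf h2c,
    ← integral_sub, ← integral_smul]
  · refine integral_congr_ae (.of_forall fun t ↦ ?_)
    simp only [← Complex.coe_smul, smul_smul, ← sub_smul]
    push_cast
    rw [inv_add_sub_inv_sub_eq hc.ne']
  · exact_mod_cast integrable_inv_add_mul_I_smul hf h2c.ne' (2 * π)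
  · simpa [sub_eq_add_neg] using integrable_inv_add_mul_I_smul hf h2c.ne' (-(2 * π))

end LaplaceTransform

section PoissonKernel

variable {s : ℝ}

lemma hasDerivAt_arctan_div (hs : s ≠ 0) (c : ℝ) :
    HasDerivAt (fun c ↦ arctan (c / s)) (s / (c ^ 2 + s ^ 2)) c := by
  convert ((hasDerivAt_id' c).div_const s).arctan using 1
  field_simp
  ring

lemma tendsto_arctan_div_atTop (hs : 0 < s) :
    Tendsto (fun c ↦ arctan (c / s)) atTop (𝓝 (π / 2)) :=
  (tendsto_arctan_atTop.mono_right nhdsWithin_le_nhds).comp (tendsto_id.atTop_div_const hs)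

lemma integrableOn_Ioi_div_sq_add_sq (s : ℝ) :
    IntegrableOn (fun c ↦ s / (c ^ 2 + s ^ 2)) (Ioi 0) := by
  wlog hs : 0 ≤ s generalizing s
  · simpa [neg_div] using (this (-s) (by linarith)).neg
  obtain rfl | hs := hs.eq_or_lt
  · simp
  exact integrableOn_Ioi_deriv_of_nonneg' (fun c _ ↦ hasDerivAt_arctan_div hs.ne' c)
    (fun c _ ↦ by positivity) (tendsto_arctan_div_atTop hs)

lemma integral_Ioi_div_sq_add_sq (hs : 0 < s) : ∫ c in Ioi 0, s / (c ^ 2 + s ^ 2) = π / 2 := by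
  simpa using integral_Ioi_of_hasDerivAt_of_tendsto' (fun c _ ↦ hasDerivAt_arctan_div hs.ne' c)
    (integrableOn_Ioi_div_sq_add_sq s) (tendsto_arctan_div_atTop hs)

lemma integral_Ioi_div_sq_add_sq_of_neg (hs : s < 0) :
    ∫ c in Ioi 0, s / (c ^ 2 + s ^ 2) = -(π / 2) := by
  simpa [neg_div, integral_neg, neg_eq_iff_eq_neg] using
    integral_Ioi_div_sq_add_sq (neg_pos.2 hs)

variable {E : Type*} [NormedAddCommGroup E] [NormedSpace ℝ E] {f : ℝ → E}

lemma integrable_prod_div_sq_add_sq_smul (hf : Integrable f) :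
    Integrable (fun p : ℝ × ℝ ↦ (p.2 / (p.1 ^ 2 + p.2 ^ 2)) • f p.2)
      ((volume.restrict (Ioi 0)).prod volume) := by
  have hmeas : AEStronglyMeasurable (fun p : ℝ × ℝ ↦ (p.2 / (p.1 ^ 2 + p.2 ^ 2)) • f p.2)
      ((volume.restrict (Ioi 0)).prod volume) :=
    .smul (Measurable.aestronglyMeasurable (by fun_prop)) hf.aestronglyMeasurable.comp_snd
  refine (integrable_prod_iff' hmeas).2
    ⟨.of_forall fun t ↦ (integrableOn_Ioi_div_sq_add_sq t).smul_const (f t), ?_⟩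
  refine (hf.norm.const_mul (π / 2)).congr ?_
  filter_upwards [volume.ae_ne 0] with t ht
  have hnorm (c : ℝ) : ‖(t / (c ^ 2 + t ^ 2)) • f t‖ = |t| / (c ^ 2 + |t| ^ 2) * ‖f t‖ := by
    rw [norm_smul, norm_div, norm_eq_abs, sq_abs, norm_of_nonneg (by positivity)]
  simp only [hnorm, integral_mul_const, integral_Ioi_div_sq_add_sq (abs_pos.2 ht)]

lemma integral_Ioi_integral_div_sq_add_sq_smul [CompleteSpace E] (hf : Integrable f) :
    ∫ c in Ioi (0 : ℝ), ∫ t, (t / (c ^ 2 + t ^ 2)) • f t =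
      (π / 2) • ((∫ t in Ioi 0, f t) - ∫ t in Iic 0, f t) := by
  have hswap := integrable_prod_div_sq_add_sq_smul hf
  have hint := hswap.integral_prod_right
  rw [integral_integral_swap hswap,
    ← intervalIntegral.integral_Iic_add_Ioi (b := 0) hint.integrableOn hint.integrableOn,
    integral_Iic_eq_integral_Iio, integral_Iic_eq_integral_Iio]
  have hneg : ∫ t in Iio 0, ∫ c in Ioi (0 : ℝ), (t / (c ^ 2 + t ^ 2)) • f t =
      ∫ t in Iio 0, -(π / 2) • f t :=
    setIntegral_congr_fun measurableSet_Iio fun t ht ↦ by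
      simp only [integral_smul_const, integral_Ioi_div_sq_add_sq_of_neg ht]
  have hpos : ∫ t in Ioi 0, ∫ c in Ioi (0 : ℝ), (t / (c ^ 2 + t ^ 2)) • f t =
      ∫ t in Ioi 0, (π / 2) • f t :=
    setIntegral_congr_fun measurableSet_Ioi fun t ht ↦ by
      simp only [integral_smul_const, integral_Ioi_div_sq_add_sq ht]
  rw [hneg, hpos, integral_smul, integral_smul]
  module

end PoissonKernel

section HardySpace

variable {E : Type*} [NormedAddCommGroup E] [NormedSpace ℂ E] {f : ℝ → E}

lemma fourier_eqOn_zero_Iic (hf : Integrable f) (hsupp : support (𝓕 f) ⊆ Ici 0) :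
    EqOn (𝓕 f) 0 (Iic 0) := by
  have hIio : EqOn (𝓕 f) 0 (Iio 0) := fun ξ hξ ↦
    notMem_support.1 fun h ↦ (mem_Iio.1 hξ).not_ge (hsupp h)
  simpa using hIio.closure (continuous_fourier_of_integrable hf) continuous_zero

variable [CompleteSpace E]

lemma integral_Ioi_exp_smul_fourier_of_support_subset (hf : Integrable f)
    (hsupp : support (𝓕 f) ⊆ Ici 0) {c : ℝ} (hc : 0 < c) :
    ∫ ξ in Ioi 0, rexp (-(2 * π * c * ξ)) • 𝓕 f ξ =
      (-(I / π)) • ∫ t, (t / (c ^ 2 + t ^ 2)) • f t := by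
  have hzero : ∫ ξ in Iic 0, rexp (2 * π * c * ξ) • 𝓕 f ξ = 0 :=
    setIntegral_eq_zero_of_forall_eq_zero fun ξ hξ ↦ by
      simp [fourier_eqOn_zero_Iic hf hsupp hξ]
  rw [← integral_Ioi_sub_integral_Iic_exp_smul_fourier hf hc, hzero, sub_zero]

lemma integrableOn_integral_Ioi_exp_smul_fourier (hf : Integrable f)
    (hsupp : support (𝓕 f) ⊆ Ici 0) :
    IntegrableOn (fun c ↦ ∫ ξ in Ioi 0, rexp (-(2 * π * c * ξ)) • 𝓕 f ξ) (Ioi 0) :=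
  ((integrable_prod_div_sq_add_sq_smul hf).integral_prod_left.smul (-(I / π) : ℂ)).congr
    ((ae_restrict_iff' measurableSet_Ioi).2 (.of_forall fun _ hc ↦
      (integral_Ioi_exp_smul_fourier_of_support_subset hf hsupp hc).symm))

lemma integral_Ioi_integral_Ioi_exp_smul_fourier (hf : Integrable f)
    (hsupp : support (𝓕 f) ⊆ Ici 0) :
    ∫ c in Ioi (0 : ℝ), ∫ ξ in Ioi 0, rexp (-(2 * π * c * ξ)) • 𝓕 f ξ = I • ∫ t in Iic 0, f t := by
  have hmean : (∫ t in Iic 0, f t) + ∫ t in Ioi 0, f t = 0 := by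
    rw [intervalIntegral.integral_Iic_add_Ioi hf.integrableOn hf.integrableOn]
    simpa [fourier_real_eq] using fourier_eqOn_zero_Iic hf hsupp (mem_Iic.2 le_rfl)
  have hπ : (π : ℂ) ≠ 0 := Complex.ofReal_ne_zero.2 pi_ne_zero
  calc ∫ c in Ioi (0 : ℝ), ∫ ξ in Ioi 0, rexp (-(2 * π * c * ξ)) • 𝓕 f ξ
      = ∫ c in Ioi (0 : ℝ), (-(I / π)) • ∫ t, (t / (c ^ 2 + t ^ 2)) • f t :=
        setIntegral_congr_fun measurableSet_Ioi fun c hc ↦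
          integral_Ioi_exp_smul_fourier_of_support_subset hf hsupp hc
    _ = (-(I / π)) • (π / 2) • ((∫ t in Ioi 0, f t) - ∫ t in Iic 0, f t) := by
        rw [integral_smul, integral_Ioi_integral_div_sq_add_sq_smul hf]
    _ = I • ∫ t in Iic 0, f t := by
        rw [eq_neg_of_add_eq_zero_right hmean, ← Complex.coe_smul, smul_smul, ← neg_add',
          ← two_smul ℂ, smul_neg, smul_smul, ← neg_smul]
        congr 1
        push_cast
        field_simp

end HardySpace

section Positivity

lemma setIntegral_pos_of_isOpen {X : Type*} [TopologicalSpace X] [MeasurableSpace X]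
    [OpensMeasurableSpace X] {μ : Measure X} [μ.IsOpenPosMeasure] {s : Set X} {f : X → ℝ} {x : X}
    (hs : IsOpen s) (hcont : Continuous f) (hint : IntegrableOn f s μ) (hf : ∀ y ∈ s, 0 ≤ f y)
    (hx : x ∈ s) (hfx : f x ≠ 0) : 0 < ∫ y in s, f y ∂μ := by
  rw [setIntegral_pos_iff_support_of_nonneg_ae (ae_restrict_of_forall_mem hs.measurableSet hf) hint]
  exact (hcont.isOpen_support.inter hs).measure_pos μ ⟨x, hfx, hx⟩

lemma integral_Ioi_exp_mul_re_fourier_pos {f : ℝ → ℂ} {c ξ₀ : ℝ} (hf : Integrable f) (hc : 0 < c)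
    (hre : ∀ ξ ∈ Ioi 0, 0 ≤ (𝓕 f ξ).re) (hξ₀ : 0 < ξ₀) (hne : (𝓕 f ξ₀).re ≠ 0) :
    0 < (∫ ξ in Ioi 0, rexp (-(c * ξ)) • 𝓕 f ξ).re := by
  have hint := integrableOn_exp_neg_mul_smul_fourier hf hc
  have hcont := continuous_fourier_of_integrable hf
  rw [← RCLike.re_to_complex, ← integral_re hint]
  simp only [RCLike.re_to_complex, Complex.smul_re, smul_eq_mul]
  exact setIntegral_pos_of_isOpen isOpen_Ioi (by fun_prop)
    (by simpa only [RCLike.re_to_complex, Complex.smul_re, smul_eq_mul] using! hint.re)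
    (fun ξ hξ ↦ mul_nonneg (exp_nonneg _) (hre ξ hξ)) hξ₀ (mul_ne_zero (exp_ne_zero _) hne)

lemma im_setIntegral_Iic_neg {f : ℝ → ℂ} {ξ₀ : ℝ} (hf : Integrable f)
    (hsupp : support (𝓕 f) ⊆ Ici 0) (hre : ∀ ξ, 0 ≤ (𝓕 f ξ).re) (hne : (𝓕 f ξ₀).re ≠ 0) :
    (∫ t in Iic 0, f t).im < 0 := by
  have hξ₀ : 0 < ξ₀ := by
    by_contra! h
    simp [fourier_eqOn_zero_Iic hf hsupp h] at hne
  set L : ℝ → ℂ := fun c ↦ ∫ ξ in Ioi 0, rexp (-(2 * π * c * ξ)) • 𝓕 f ξ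
  have hLint : IntegrableOn L (Ioi 0) := integrableOn_integral_Ioi_exp_smul_fourier hf hsupp
  have hLpos : ∀ c ∈ Ioi 0, 0 < (L c).re := fun c hc ↦
    integral_Ioi_exp_mul_re_fourier_pos hf (mul_pos two_pi_pos hc) (fun ξ _ ↦ hre ξ) hξ₀ hne
  have hpos : 0 < ∫ c in Ioi 0, (L c).re := by
    refine (setIntegral_pos_iff_support_of_nonneg_ae ?_ hLint.re).2 ?_
    · exact ae_restrict_of_forall_mem measurableSet_Ioi fun c hc ↦ (hLpos c hc).le
    · have hIoi : Ioi 0 ⊆ support fun c ↦ RCLike.re (L c) := fun c hc ↦ (hLpos c hc).ne'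
      rw [inter_eq_right.2 hIoi]
      simp
  have hLre : ∫ c in Ioi 0, (L c).re = -(∫ t in Iic 0, f t).im := by
    have hL : ∫ c in Ioi 0, L c = I • ∫ t in Iic 0, f t :=
      integral_Ioi_integral_Ioi_exp_smul_fourier hf hsupp
    simpa [hL] using integral_re hLint
  linarith

end Positivity

lemma norm_e2pi (t : ℝ) : ‖e2pi t‖ = 1 := by
  simp [e2pi, Complex.norm_exp]

lemma continuous_e2pi : Continuous e2pi := by
  unfold e2pi
  fun_prop

lemma integrable_e2pi_mul {γ : ℝ → ℂ} (hγ : Integrable γ) : Integrable fun t ↦ e2pi t * γ t :=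
  hγ.bdd_mul continuous_e2pi.aestronglyMeasurable (.of_forall fun t ↦ (norm_e2pi t).le)

lemma fourier_e2pi_mul (γ : ℝ → ℂ) (ξ : ℝ) : 𝓕 (fun t ↦ e2pi t * γ t) ξ = 𝓕 γ (ξ - 1) := by
  simp only [fourier_real_eq_integral_exp_smul, e2pi, smul_eq_mul, ← mul_assoc, ← Complex.exp_add]
  congr! 4
  push_cast
  ring

theorem statement0_general (γ : ℝ → ℂ) (hInt : Integrable γ)
    (hne : ¬ (γ =ᵐ[volume] (0 : ℝ → ℂ)))
    (him : ∀ ξ : ℝ, (𝓕 γ ξ).im = 0) (hre : ∀ ξ : ℝ, 0 ≤ (𝓕 γ ξ).re)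
    (hsupp : Function.support (𝓕 γ) ⊆ Set.Ici (-1)) :
    (∫ t in Set.Iic (0 : ℝ), e2pi t * γ t).im < 0 := by
  obtain ⟨ξ₀, hξ₀⟩ : ∃ ξ, (𝓕 γ ξ).re ≠ 0 := by
    by_contra! h
    exact hne (ae_eq_zero_of_fourier_eq_zero hInt (funext fun ξ ↦ Complex.ext (h ξ) (him ξ)))
  refine im_setIntegral_Iic_neg (ξ₀ := ξ₀ + 1) (integrable_e2pi_mul hInt) (fun ξ hξ ↦ ?_)
    (fun ξ ↦ ?_) ?_
  · have : ξ - 1 ∈ Ici (-1 : ℝ) := hsupp (by simpa [fourier_e2pi_mul] using hξ)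
    simpa using this
  · simpa only [fourier_e2pi_mul] using hre (ξ - 1)
  · simpa only [fourier_e2pi_mul, add_sub_cancel_right] using hξ₀

/-- if `γ ∈ L¹(ℝ)` is not a.e. zero and its Fourier transform
`𝓕γ(ξ) = ∫ e^{-2πiξt} γ(t) dt` is real-valued, nonnegative and supported in `[0,1]`,
then `∫_{-∞}^0 e^{2πit} γ(t) dt ≠ 0`, i.e. `γ` is non-degenerate. -/
theorem statement0 (γ : ℝ → ℂ) (hInt : Integrable γ)
    (hne : ¬ (γ =ᵐ[volume] (0 : ℝ → ℂ)))
    (him : ∀ ξ : ℝ, (𝓕 γ ξ).im = 0) (hre : ∀ ξ : ℝ, 0 ≤ (𝓕 γ ξ).re)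
    (hsupp : Function.support (𝓕 γ) ⊆ Set.Icc 0 1) :
    (∫ t in Set.Iic (0:ℝ), e2pi t * γ t) ≠ 0 := by
  intro h
  simpa [h] using statement0_general γ hInt hne him hre
    (hsupp.trans (Icc_subset_Ici_self.trans (Ici_subset_Ici.2 (by norm_num))))
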